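/- Let n ≥ 2 and let P be the tropical polytope generated by v^1,…,v^p ∈ ℝ^n. Then P is pure if and only if every extreme point of P has exactly one extremality type, i.e., for every extreme point v of P and all indices i ≠ j, it is not the case that v is an extreme point of P of type i and also of type j. -/

import Mathlib

section Defs
variable {α : Type*} [LinearOrder α] [AddCommGroup α]

/-- The sector `S(a,i) = {x | x_j - a_j ≤ x_i - a_i for all j}`. -/
def sector {n : ℕ} (a : Fin n → α) (i : Fin n) : Set (Fin n → α) :=
  {x | ∀ j, x j - a j ≤ x i - a i}

/-- The tropical polytope generated by the points `v 0, …, v (p-1)`: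
each coordinate of `x` is the maximum over `r` of `l r + v r i`. -/
def tropPoly {n p : ℕ} (v : Fin p → Fin n → α) : Set (Fin n → α) :=
  {x | ∃ l : Fin p → α, ∀ i, IsGreatest (Set.range fun r => l r + v r i) (x i)}

/-- `v` is an extreme point of `P` of type `i`. -/
def ExtremeOfType {n : ℕ} (P : Set (Fin n → α)) (v : Fin n → α) (i : Fin n) : Prop :=
  v ∈ P ∧ ∀ x ∈ P ∩ sector v i, ∃ c : α, x = fun k => v k + c

/-- `v` is an extreme point of `P`. -/
def IsExtremePt {n : ℕ} (P : Set (Fin n → α)) (v : Fin n → α) : Prop :=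
  v ∈ P ∧ ∀ x ∈ P, ∀ y ∈ P, (∀ k, v k = max (x k) (y k)) → v = x ∨ v = y

/-- The tropical half-space `H(a,I)`: `max_{i ∈ I} (x_i - a_i) ≥ max_{j ∉ I} (x_j - a_j)`. -/
def halfSpace {n : ℕ} (a : Fin n → α) (I : Set (Fin n)) : Set (Fin n → α) :=
  {x | ∃ i ∈ I, ∀ j ∉ I, x j - a j ≤ x i - a i}

/-- `S_i(a)`, the set of indices `r` such that `v r ∈ S(a, i)`. -/
def typeSet {n p : ℕ} (v : Fin p → Fin n → α) (a : Fin n → α) (i : Fin n) : Set (Fin p) :=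
  {r | v r ∈ sector a i}

/-- `a` is an `(I,j)`-pseudovertex of the tropical polytope generated by `v`. -/
def IsPseudovertex {n p : ℕ} (v : Fin p → Fin n → α) (a : Fin n → α) (I : Set (Fin n))
    (j : Fin n) : Prop :=
  (∀ r, ∃ i ∈ I, r ∈ typeSet v a i) ∧
  (∀ k ∉ I, ∃ i ∈ I, (typeSet v a i ∩ typeSet v a k).Nonempty) ∧
  (∀ i ∈ I, ∃ r, r ∈ typeSet v a i ∩ typeSet v a j ∧ ∀ h ∈ I, h ≠ i → r ∉ typeSet v a h)

end Defs

/-- `P` is pure: `P₀ = {x ∈ P | x 0 = 0}` equals the closure of its interior, relative to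
the hyperplane `{x | x 0 = 0}` with the subspace topology. -/
def IsPure {n : ℕ} [NeZero n] (P : Set (Fin n → ℝ)) : Prop :=
  letI P0 : Set {x : Fin n → ℝ // x 0 = 0} := {x | (x : Fin n → ℝ) ∈ P}
  P0 = closure (interior P0)

/-!
A point `x` lies in the tropical polytope `P` iff every sector at `x` contains a generator, and
`w ∈ S(a, i)` is, for fixed `i`, a preorder whose equivalence classes are the lines `a + ℝ 𝟙`.

If `v` is extreme of type `i`, then near `v` a generator lies in `S(y, i)` only if it is a translate
of `v`; hence points `y ∈ P` near `v` satisfy `v ∈ S(y, i)`. Two types `i ≠ j` therefore confine `P`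
near `v` to the hyperplane `v i - y i = v j - y j`, and `v` is not in the closure of the interior.

Conversely let `x ∈ P`. If, for some nonempty set `K` of indices, no generator lies in exactly one
of the sectors `S(x, i)`, `i ∈ K`, then scale the generators to touch `x` from below: a minimal one
among those touching `x` in `K` is extreme of at least two types. Otherwise the indices can be
peeled off one at a time, which yields a direction `d` along which `x` moves into points having a
generator in the interior of each sector, that is, into the interior of `P`.
-/

open Filter Topology

section Heights

-- The index isolated in `K` gets a larger value than all the others, which are treated recursively.
theorem exists_strict_min_on_of_isolated {ι κ β : Type*} [Finite κ] [LinearOrder β] [NoMaxOrder β]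
    [Nonempty β] {R : ι → κ → Prop}
    (isolated : ∀ K : Finset κ, K.Nonempty → ∃ r, ∃ i ∈ K, R r i ∧ ∀ j ∈ K, R r j → j = i)
    (K : Finset κ) :
    ∃ d : κ → β, ∀ i ∈ K, ∃ r, R r i ∧ ∀ k ∈ K, k ≠ i → R r k → d i < d k := by
  classical
  induction K using Finset.strongInduction with
  | H K ih =>
    obtain rfl | hK := K.eq_empty_or_nonempty
    · exact ⟨fun _ => Classical.arbitrary β, by simp⟩
    obtain ⟨r, i, hi, hri, unique⟩ := isolated K hK
    obtain ⟨d, hd⟩ := ih (K.erase i) (Finset.erase_ssubset hi)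
    obtain ⟨b, hb⟩ := (Set.finite_range d).bddAbove
    obtain ⟨t, ht⟩ := exists_gt b
    have d_lt (k : κ) : d k < t := (hb ⟨k, rfl⟩).trans_lt ht
    refine ⟨Function.update d i t, fun j hj => ?_⟩
    obtain rfl | hji := eq_or_ne j i
    · exact ⟨r, hri, fun k hk hkj hrk => absurd (unique k hk hrk) hkj⟩
    obtain ⟨s, hsj, hs⟩ := hd j (Finset.mem_erase.2 ⟨hji, hj⟩)
    refine ⟨s, hsj, fun k hk hkj hsk => ?_⟩
    rw [Function.update_of_ne hji]
    obtain rfl | hki := eq_or_ne k i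
    · simpa only [Function.update_self] using d_lt j
    · simpa only [Function.update_of_ne hki] using hs k (Finset.mem_erase.2 ⟨hki, hk⟩) hkj hsk

end Heights

section Sectors

variable {α : Type*} [LinearOrder α] [AddCommGroup α] {n : ℕ}

/-- The open sector at `a` in direction `i`: the strict version of `sector a i`. A generator in the
open sector at a point stays in the sectors of all nearby points. -/
def openSector (a : Fin n → α) (i : Fin n) : Set (Fin n → α) :=
  {x | ∀ j, j ≠ i → x j - a j < x i - a i}

theorem openSector_subset_sector (a : Fin n → α) (i : Fin n) : openSector a i ⊆ sector a i := by
  intro x hx j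
  obtain rfl | hji := eq_or_ne j i
  · exact le_rfl
  · exact (hx j hji).le

theorem lt_of_mem_sector_of_notMem_sector {a x : Fin n → α} {i k : Fin n} (hi : x ∈ sector a i)
    (hk : x ∉ sector a k) : x k - a k < x i - a i :=
  lt_of_not_ge fun h => hk fun j => (hi j).trans h

theorem mem_sector_add_const {a : Fin n → α} (c : α) (i : Fin n) :
    a ∈ sector (fun k => a k + c) i := fun j => by
  simp only [sub_add_cancel_left, le_refl]

variable [IsOrderedAddMonoid α]

theorem mem_sector_trans {a b x : Fin n → α} {i : Fin n} (hx : x ∈ sector b i)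
    (hb : b ∈ sector a i) : x ∈ sector a i := fun j => by
  simpa only [sub_add_sub_cancel] using add_le_add (hx j) (hb j)

theorem exists_eq_add_const_of_mem_sector {a x : Fin n → α} {i : Fin n} (hx : x ∈ sector a i)
    (ha : a ∈ sector x i) : ∃ c, x = fun k => a k + c := by
  refine ⟨x i - a i, funext fun j => ?_⟩
  have hle : x i - a i ≤ x j - a j := by
    simpa only [neg_sub] using neg_le_neg (ha j)
  rw [← (hx j).antisymm hle, add_sub_cancel]

theorem mem_sector_of_add_le_of_add_eq {w x : Fin n → α} {c : α} {i : Fin n}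
    (hle : ∀ j, c + w j ≤ x j) (heq : c + w i = x i) : w ∈ sector x i := fun j => by
  have h : w j - x j ≤ -c := by
    simpa only [sub_le_iff_le_add, neg_add_eq_sub, le_sub_iff_add_le'] using hle j
  rwa [← heq, sub_add_cancel_right]

-- `c` is the tropical residuation `min_k (x k - w k)`: `c + w` is the largest translate below `x`.
theorem exists_add_le_and_eq_of_mem_sector (w x : Fin n → α) :
    ∃ c, (∀ j, c + w j ≤ x j) ∧ ∀ i, w ∈ sector x i → c + w i = x i := by
  obtain _ | _ := isEmpty_or_nonempty (Fin n)
  · exact ⟨0, isEmptyElim, isEmptyElim⟩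
  obtain ⟨k, hk⟩ := Finite.exists_min fun k => x k - w k
  refine ⟨x k - w k, fun j => le_sub_iff_add_le.1 (hk j), fun i hi => ?_⟩
  have hle : x i - w i ≤ x k - w k := by
    simpa only [neg_sub] using neg_le_neg (hi k)
  rw [(hk i).antisymm hle, sub_add_cancel]

end Sectors

section TropicalPolytopes

variable {α : Type*} [LinearOrder α] [AddCommGroup α] [IsOrderedAddMonoid α] {n p : ℕ}
  {vs : Fin p → Fin n → α}

theorem mem_tropPoly_iff_forall_exists_mem_sector {x : Fin n → α} :
    x ∈ tropPoly vs ↔ ∀ i, ∃ r, vs r ∈ sector x i := by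
  constructor
  · rintro ⟨l, hl⟩ i
    obtain ⟨r, hr⟩ := (hl i).1
    exact ⟨r, mem_sector_of_add_le_of_add_eq (fun j => (hl j).2 ⟨r, rfl⟩) hr⟩
  · intro h
    choose l hle heq using fun r => exists_add_le_and_eq_of_mem_sector (vs r) x
    refine ⟨l, fun i => ⟨?_, Set.forall_mem_range.2 fun r => hle r i⟩⟩
    obtain ⟨r, hr⟩ := h i
    exact ⟨r, heq r i hr⟩

theorem generator_mem_tropPoly (r : Fin p) : vs r ∈ tropPoly vs :=
  mem_tropPoly_iff_forall_exists_mem_sector.2 fun i =>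
    ⟨r, fun j => by simp only [sub_self, le_refl]⟩

theorem add_const_mem_tropPoly {x : Fin n → α} (hx : x ∈ tropPoly vs) (c : α) :
    (fun k => x k + c) ∈ tropPoly vs := by
  rw [mem_tropPoly_iff_forall_exists_mem_sector] at hx ⊢
  intro i
  obtain ⟨r, hr⟩ := hx i
  exact ⟨r, mem_sector_trans hr (mem_sector_add_const c i)⟩

theorem ExtremeOfType.eq_of_le_of_eq {P : Set (Fin n → α)} {v x : Fin n → α} {i : Fin n}
    (hv : ExtremeOfType P v i) (hx : x ∈ P) (hle : ∀ k, x k ≤ v k) (hi : x i = v i) : v = x := by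
  have hsector : x ∈ sector v i := fun j => by
    simpa only [hi, sub_self, sub_nonpos] using hle j
  obtain ⟨c, rfl⟩ := hv.2 x ⟨hx, hsector⟩
  simp only [add_eq_left.1 hi, add_zero]

theorem ExtremeOfType.isExtremePt {P : Set (Fin n → α)} {v : Fin n → α} {i : Fin n}
    (hv : ExtremeOfType P v i) : IsExtremePt P v := by
  refine ⟨hv.1, fun x hx y hy hmax => ?_⟩
  obtain hi | hi := max_choice (x i) (y i)
  · exact .inl <| hv.eq_of_le_of_eq hx (fun k => hmax k ▸ le_max_left _ _) (by rw [hmax i, hi])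
  · exact .inr <| hv.eq_of_le_of_eq hy (fun k => hmax k ▸ le_max_right _ _) (by rw [hmax i, hi])

theorem extremeOfType_of_forall_generator {v : Fin n → α} {i : Fin n} (hv : v ∈ tropPoly vs)
    (hgen : ∀ s, vs s ∈ sector v i → ∃ c, vs s = fun k => v k + c) :
    ExtremeOfType (tropPoly vs) v i := by
  refine ⟨hv, fun w hw => ?_⟩
  obtain ⟨s, hs⟩ := mem_tropPoly_iff_forall_exists_mem_sector.1 hw.1 i
  obtain ⟨c, hc⟩ := hgen s (mem_sector_trans hs hw.2)
  have hvs : v ∈ sector (vs s) i := hc ▸ mem_sector_add_const c i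
  exact exists_eq_add_const_of_mem_sector hw.2 (mem_sector_trans hvs hs)

theorem exists_generator_extremeOfType {x : Fin n → α} (hx : x ∈ tropPoly vs) {K : Finset (Fin n)}
    (hK : K.Nonempty) :
    ∃ r, (∃ i ∈ K, vs r ∈ sector x i) ∧
      ∀ i ∈ K, vs r ∈ sector x i → ExtremeOfType (tropPoly vs) (vs r) i := by
  choose c _ heq using fun r => exists_add_le_and_eq_of_mem_sector (vs r) x
  let touching : Set (Fin p) := {r | ∃ i ∈ K, vs r ∈ sector x i}
  have touching_nonempty : touching.Nonempty := by
    obtain ⟨i, hi⟩ := hK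
    obtain ⟨r, hr⟩ := mem_tropPoly_iff_forall_exists_mem_sector.1 hx i
    exact ⟨r, i, hi, hr⟩
  obtain ⟨r, hr, hmin⟩ :=
    touching.toFinite.exists_minimalFor (fun r k => c r + vs r k) touching touching_nonempty
  refine ⟨r, hr, fun i hi hri => ?_⟩
  refine extremeOfType_of_forall_generator (generator_mem_tropPoly r) fun s hs => ?_
  have hsi : vs s ∈ sector x i := mem_sector_trans hs hri
  have hle : (fun k => c s + vs s k) ≤ fun k => c r + vs r k := fun k => by
    have hci : c s + vs s i = c r + vs r i := (heq s i hsi).trans (heq r i hri).symm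
    have hk := hs k
    grind
  have hge := hmin ⟨i, hi, hsi⟩ hle
  refine ⟨c r - c s, funext fun k => ?_⟩
  have hk : c s + vs s k = c r + vs r k := (hle k).antisymm (hge k)
  grind

theorem exists_isolating_generator {x : Fin n → α} (hx : x ∈ tropPoly vs)
    (unique_type : ∀ v i j, ExtremeOfType (tropPoly vs) v i → ExtremeOfType (tropPoly vs) v j →
      i = j)
    {K : Finset (Fin n)} (hK : K.Nonempty) :
    ∃ r, ∃ i ∈ K, vs r ∈ sector x i ∧ ∀ j ∈ K, vs r ∈ sector x j → j = i := by
  obtain ⟨r, ⟨i, hi, hri⟩, hext⟩ := exists_generator_extremeOfType hx hK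
  exact ⟨r, i, hi, hri, fun j hj hrj => unique_type _ j i (hext j hj hrj) (hext i hi hri)⟩

end TropicalPolytopes

section Topology

variable {α : Type*} [LinearOrder α] [AddCommGroup α] [TopologicalSpace α]
  [OrderClosedTopology α] [ContinuousSub α] {n : ℕ}

theorem isClosed_setOf_mem_sector (w : Fin n → α) (i : Fin n) :
    IsClosed {a : Fin n → α | w ∈ sector a i} := by
  change IsClosed {a : Fin n → α | ∀ j, w j - a j ≤ w i - a i}
  simp only [Set.ofPred_forall]
  exact isClosed_iInter fun j => isClosed_le (by fun_prop) (by fun_prop)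

theorem isOpen_setOf_mem_openSector (w : Fin n → α) (i : Fin n) :
    IsOpen {a : Fin n → α | w ∈ openSector a i} := by
  change IsOpen {a : Fin n → α | ∀ j, j ≠ i → w j - a j < w i - a i}
  simp only [Set.ofPred_forall]
  exact isOpen_iInter_of_finite fun j => isOpen_iInter_of_finite fun _ =>
    isOpen_lt (by fun_prop) (by fun_prop)

variable [IsOrderedAddMonoid α] {p : ℕ} {vs : Fin p → Fin n → α}

theorem isClosed_tropPoly : IsClosed (tropPoly vs) := by
  have h : tropPoly vs = ⋂ i, ⋃ r, {x | vs r ∈ sector x i} := by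
    ext x
    simp only [mem_tropPoly_iff_forall_exists_mem_sector, Set.mem_iInter, Set.mem_iUnion,
      Set.mem_ofPred_eq]
  rw [h]
  exact isClosed_iInter fun i => isClosed_iUnion_of_finite fun r => isClosed_setOf_mem_sector _ i

theorem mem_interior_tropPoly_of_forall_mem_openSector {x : Fin n → α}
    (hx : ∀ i, ∃ r, vs r ∈ openSector x i) : x ∈ interior (tropPoly vs) := by
  have hx' : ∀ᶠ y in 𝓝 x, ∀ i, ∃ r, vs r ∈ sector y i := by
    refine eventually_all.2 fun i => ?_
    obtain ⟨r, hr⟩ := hx i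
    filter_upwards [(isOpen_setOf_mem_openSector (vs r) i).mem_nhds hr] with y hy
    exact ⟨r, openSector_subset_sector y i hy⟩
  exact mem_interior_iff_mem_nhds.2 <|
    hx'.mono fun y hy => mem_tropPoly_iff_forall_exists_mem_sector.2 hy

theorem ExtremeOfType.eventually_mem_sector {v : Fin n → α} {i : Fin n}
    (hv : ExtremeOfType (tropPoly vs) v i) :
    ∀ᶠ y in 𝓝 v, y ∈ tropPoly vs → v ∈ sector y i := by
  have hgen : ∀ᶠ y in 𝓝 v, ∀ r, vs r ∈ sector y i → vs r ∈ sector v i := by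
    refine eventually_all.2 fun r => ?_
    by_cases hr : vs r ∈ sector v i
    · exact .of_forall fun _ _ => hr
    · filter_upwards [(isClosed_setOf_mem_sector (vs r) i).isOpen_compl.mem_nhds hr] with y hy hy'
      exact absurd hy' hy
  filter_upwards [hgen] with y hy hyP
  obtain ⟨r, hr⟩ := mem_tropPoly_iff_forall_exists_mem_sector.1 hyP i
  obtain ⟨c, hc⟩ := hv.2 (vs r) ⟨generator_mem_tropPoly r, hy r hr⟩
  have hvr : v ∈ sector (vs r) i := hc ▸ mem_sector_add_const c i
  exact mem_sector_trans hvr hr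

end Topology

section TwoTypes

theorem interior_setOf_sub_eq_empty {ι α : Type*} [AddCommGroup α] [TopologicalSpace α]
    [IsTopologicalAddGroup α] {i j : ι} (hij : i ≠ j) (c : α) [NeBot (𝓝[≠] c)] :
    interior {y : ι → α | y i - y j = c} = ∅ := by
  classical
  have hcont : Continuous fun y : ι → α => y i - y j := by fun_prop
  have hopen : IsOpenMap fun y : ι → α => y i - y j := .of_sections fun y =>
    ⟨fun t => Function.update y i (t + y j), by fun_prop, by simp, fun t => by simp [hij.symm]⟩
  change interior ((fun y : ι → α => y i - y j) ⁻¹' {c}) = ∅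
  rw [← hopen.preimage_interior_eq_interior_preimage hcont, interior_singleton, Set.preimage_empty]

theorem ExtremeOfType.notMem_closure_interior {α : Type*} [LinearOrder α] [AddCommGroup α]
    [IsOrderedAddMonoid α] [TopologicalSpace α] [IsTopologicalAddGroup α] [OrderClosedTopology α]
    [∀ a : α, NeBot (𝓝[≠] a)] {n p : ℕ} {vs : Fin p → Fin n → α} {v : Fin n → α}
    {i j : Fin n} (hi : ExtremeOfType (tropPoly vs) v i) (hj : ExtremeOfType (tropPoly vs) v j)
    (hij : i ≠ j) : v ∉ closure (interior (tropPoly vs)) := by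
  intro hv
  have hyperplane : ∀ᶠ y in 𝓝 v, y ∈ tropPoly vs → y i - y j = v i - v j := by
    filter_upwards [hi.eventually_mem_sector, hj.eventually_mem_sector] with y hyi hyj hy
    have heq : v i - y i = v j - y j := (hyj hy i).antisymm (hyi hy j)
    rw [sub_eq_sub_iff_sub_eq_sub] at heq
    exact heq.symm
  obtain ⟨y, hy, hnear⟩ :=
    ((mem_closure_iff_frequently.1 hv).and_eventually hyperplane.eventually_nhds).exists
  have hy' : y ∈ interior {y | y i - y j = v i - v j} := mem_interior_iff_mem_nhds.2 <| by
    filter_upwards [hnear, mem_interior_iff_mem_nhds.1 hy] with z hz hzP using hz hzP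
  simp only [interior_setOf_sub_eq_empty hij, Set.mem_empty_iff_false] at hy'

end TwoTypes

section HyperplaneSections

variable {ι α : Type*} [AddCommGroup α]

/-- The section of `P` by the hyperplane `x i₀ = 0`, as a subset of that hyperplane: for `i₀ = 0`,
the set `P₀` in the definition of purity. -/
def hyperplaneSection (P : Set (ι → α)) (i₀ : ι) : Set {x : ι → α // x i₀ = 0} :=
  {x | (x : ι → α) ∈ P}

/-- The projection of `ι → α` onto the hyperplane `x i₀ = 0` along the all-ones vector. It is open
and continuous, so it transports closures and interiors between `P` and its hyperplane section. -/
def toHyperplane (i₀ : ι) (x : ι → α) : {x : ι → α // x i₀ = 0} :=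
  ⟨fun k => x k - x i₀, sub_self _⟩

theorem toHyperplane_add_const {i₀ : ι} (x : {x : ι → α // x i₀ = 0}) (c : α) :
    toHyperplane i₀ (fun k => x.1 k + c) = x :=
  Subtype.ext <| funext fun k => by simp only [toHyperplane, x.2, zero_add, add_sub_cancel_right]

theorem surjective_toHyperplane (i₀ : ι) : Function.Surjective (toHyperplane (α := α) i₀) :=
  fun y => ⟨_, toHyperplane_add_const y 0⟩

theorem preimage_toHyperplane_hyperplaneSection {P : Set (ι → α)}
    (hP : ∀ x ∈ P, ∀ c, (fun k => x k + c) ∈ P) (i₀ : ι) :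
    toHyperplane i₀ ⁻¹' hyperplaneSection P i₀ = P := by
  ext x
  refine ⟨fun hx => ?_, fun hx => ?_⟩
  · simpa only [toHyperplane, sub_add_cancel] using hP _ hx (x i₀)
  · change (fun k => x k - x i₀) ∈ P
    simpa only [← sub_eq_add_neg] using hP x hx (-x i₀)

variable [TopologicalSpace α] [IsTopologicalAddGroup α]

theorem continuous_toHyperplane (i₀ : ι) : Continuous (toHyperplane (α := α) i₀) := by
  unfold toHyperplane
  fun_prop

theorem isOpenMap_toHyperplane (i₀ : ι) : IsOpenMap (toHyperplane (α := α) i₀) := by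
  refine .of_sections fun x => ?_
  have hcont : Continuous fun (y : {x : ι → α // x i₀ = 0}) k => y.1 k + x i₀ :=
    continuous_pi fun k => ((continuous_apply k).comp continuous_subtype_val).add continuous_const
  exact ⟨_, hcont.continuousAt, funext fun k => sub_add_cancel (x k) (x i₀),
    fun y => toHyperplane_add_const y (x i₀)⟩

theorem hyperplaneSection_eq_closure_interior_iff {P : Set (ι → α)}
    (hP : ∀ x ∈ P, ∀ c, (fun k => x k + c) ∈ P) (i₀ : ι) :
    hyperplaneSection P i₀ = closure (interior (hyperplaneSection P i₀)) ↔
      P = closure (interior P) := by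
  rw [← (surjective_toHyperplane i₀).preimage_injective.eq_iff,
    (isOpenMap_toHyperplane i₀).preimage_closure_eq_closure_preimage (continuous_toHyperplane i₀),
    (isOpenMap_toHyperplane i₀).preimage_interior_eq_interior_preimage (continuous_toHyperplane i₀),
    preimage_toHyperplane_hyperplaneSection hP]

end HyperplaneSections

section OrderedField

theorem tendsto_add_smul_nhdsGT_zero {𝕜 E : Type*} [Semiring 𝕜] [Preorder 𝕜] [TopologicalSpace 𝕜]
    [AddCommMonoid E] [Module 𝕜 E] [TopologicalSpace E] [ContinuousAdd E] [ContinuousSMul 𝕜 E]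
    (x d : E) :
    Tendsto (fun ε : 𝕜 => x + ε • d) (𝓝[>] 0) (𝓝 x) := by
  have hcont : Continuous fun ε : 𝕜 => x + ε • d := by fun_prop
  exact (hcont.tendsto' 0 x (by simp)).mono_left nhdsWithin_le_nhds

variable {𝕜 : Type*} [Field 𝕜] [LinearOrder 𝕜] [IsStrictOrderedRing 𝕜] [TopologicalSpace 𝕜]
  [OrderTopology 𝕜] {n p : ℕ} {vs : Fin p → Fin n → 𝕜}

theorem eventually_mem_openSector_add_smul {w x d : Fin n → 𝕜} {i : Fin n} (hi : w ∈ sector x i)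
    (hd : ∀ k, k ≠ i → w ∈ sector x k → d i < d k) :
    ∀ᶠ ε in 𝓝[>] (0 : 𝕜), w ∈ openSector (x + ε • d) i := by
  refine eventually_all.2 fun k => eventually_imp_distrib_left.2 fun hki => ?_
  by_cases hk : w ∈ sector x k
  · filter_upwards [self_mem_nhdsWithin] with ε hε
    have hεd : ε * d i < ε * d k := mul_lt_mul_of_pos_left (hd k hki hk) hε
    simp only [Pi.add_apply, Pi.smul_apply, smul_eq_mul]
    linarith [hi k]
  · have hopen : IsOpen {y : Fin n → 𝕜 | w k - y k < w i - y i} :=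
      isOpen_lt (by fun_prop) (by fun_prop)
    exact (tendsto_add_smul_nhdsGT_zero (𝕜 := 𝕜) x d).eventually
      (hopen.mem_nhds (lt_of_mem_sector_of_notMem_sector hi hk))

theorem mem_closure_interior_tropPoly_of_direction {x d : Fin n → 𝕜}
    (hd : ∀ i, ∃ r, vs r ∈ sector x i ∧ ∀ k, k ≠ i → vs r ∈ sector x k → d i < d k) :
    x ∈ closure (interior (tropPoly vs)) := by
  refine mem_closure_of_tendsto (tendsto_add_smul_nhdsGT_zero (𝕜 := 𝕜) x d) ?_
  have hopen : ∀ᶠ ε in 𝓝[>] (0 : 𝕜), ∀ i, ∃ r, vs r ∈ openSector (x + ε • d) i := by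
    refine eventually_all.2 fun i => ?_
    obtain ⟨r, hr, hrd⟩ := hd i
    exact (eventually_mem_openSector_add_smul hr hrd).mono fun ε hε => ⟨r, hε⟩
  exact hopen.mono fun ε hε => mem_interior_tropPoly_of_forall_mem_openSector hε

theorem mem_closure_interior_tropPoly_of_unique_type {x : Fin n → 𝕜} (hx : x ∈ tropPoly vs)
    (unique_type : ∀ v i j, ExtremeOfType (tropPoly vs) v i → ExtremeOfType (tropPoly vs) v j →
      i = j) :
    x ∈ closure (interior (tropPoly vs)) := by
  obtain ⟨d, hd⟩ := exists_strict_min_on_of_isolated (β := 𝕜)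
    (fun K hK => exists_isolating_generator hx unique_type (K := K) hK) Finset.univ
  exact mem_closure_interior_tropPoly_of_direction (d := d) (by simpa using hd)

theorem isPure_iff_unique_extremality_type_general (vs : Fin p → Fin n → 𝕜) (i₀ : Fin n) :
    hyperplaneSection (tropPoly vs) i₀ =
        closure (interior (hyperplaneSection (tropPoly vs) i₀)) ↔
      ∀ v : Fin n → 𝕜, IsExtremePt (tropPoly vs) v →
        ∀ i j : Fin n, i ≠ j →
          ¬(ExtremeOfType (tropPoly vs) v i ∧ ExtremeOfType (tropPoly vs) v j) := by
  rw [hyperplaneSection_eq_closure_interior_iff fun _ => add_const_mem_tropPoly]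
  constructor
  · rintro hpure v - i j hij ⟨hi, hj⟩
    exact hi.notMem_closure_interior hj hij (hpure ▸ hi.1)
  · intro H
    refine Set.Subset.antisymm (fun x hx => ?_) (closure_minimal interior_subset isClosed_tropPoly)
    refine mem_closure_interior_tropPoly_of_unique_type hx fun v i j hi hj => ?_
    by_contra hij
    exact H v hi.isExtremePt i j hij ⟨hi, hj⟩

end OrderedField

/-- the tropical polytope `P` is pure iff every extreme point of `P` has exactly
one extremality type. -/
theorem isPure_iff_unique_extremality_type {n p : ℕ} [NeZero n] (hn : 2 ≤ n)
    (vs : Fin p → Fin n → ℝ) :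
    IsPure (tropPoly vs) ↔
      ∀ v : Fin n → ℝ, IsExtremePt (tropPoly vs) v →
        ∀ i j : Fin n, i ≠ j →
          ¬(ExtremeOfType (tropPoly vs) v i ∧ ExtremeOfType (tropPoly vs) v j) := by
  exact isPure_iff_unique_extremality_type_general vs 0
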